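/- The sum ∑_{n=1}^∞ H_n / ((2n+1) C(2n,n)) equals the negative of the integral from 0 to 1 of log(1 - v(1-v)) / (1 - v(1-v)) dv. -/

import Mathlib

/-!
The weights are moments, `1 / ((2n+1) C(2n,n)) = ∫₀¹ (v(1-v))ⁿ dv`, an Euler beta integral. Since
`v(1-v) ≤ 1/4`, a power series `∑ aₙ tⁿ` that converges absolutely at `t = 1/4` can be integrated
termwise at `t = v(1-v)`. For `aₙ = Hₙ xⁿ` the series is `-log(1-xt)/(1-xt)`, the Cauchy product of
`∑ tⁿ/n = -log(1-t)` with the geometric series, evaluated at `xt`.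
-/

open Finset
open scoped Nat

theorem integral_pow_mul_one_sub_pow (m n : ℕ) :
    ∫ v in (0 : ℝ)..1, v ^ m * (1 - v) ^ n = (m ! * n ! : ℝ) / (m + n + 1)! := by
  have integral_eq_beta : ((∫ v in (0 : ℝ)..1, v ^ m * (1 - v) ^ n : ℝ) : ℂ) =
      Complex.betaIntegral (m + 1) (n + 1) := by
    simp [Complex.betaIntegral, ← intervalIntegral.integral_ofReal]
  have beta_eq_factorial : Complex.betaIntegral (m + 1) (n + 1) = m ! * n ! / (m + n + 1)! := by
    have cast_add : (m + 1 + (n + 1) : ℂ) = (m + n + 1 : ℕ) + 1 := by push_cast; ring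
    have re_pos (k : ℕ) : 0 < (k + 1 : ℂ).re := by simpa using k.cast_add_one_pos (α := ℝ)
    rw [Complex.betaIntegral_eq_Gamma_mul_div _ _ (re_pos m) (re_pos n), cast_add]
    simp only [Complex.Gamma_nat_eq_factorial]
  apply Complex.ofReal_injective
  rw [integral_eq_beta, beta_eq_factorial]
  simp

theorem integral_mul_one_sub_pow (n : ℕ) :
    ∫ v in (0 : ℝ)..1, (v * (1 - v)) ^ n = ((2 * n + 1) * n.centralBinom : ℝ)⁻¹ := by
  have centralBinom_eq : (n.centralBinom * n ! * n ! : ℝ) = (n + n)! := by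
    rw [Nat.centralBinom_eq_two_mul_choose, two_mul]
    exact_mod_cast Nat.add_choose_mul_factorial_mul_factorial n n
  have centralBinom_ne_zero : (n.centralBinom : ℝ) ≠ 0 := mod_cast n.centralBinom_ne_zero
  simp_rw [mul_pow]
  rw [integral_pow_mul_one_sub_pow, Nat.factorial_succ, Nat.cast_mul, ← centralBinom_eq]
  push_cast
  field_simp
  ring

theorem norm_mul_one_sub_le {v : ℝ} (hv : v ∈ Set.Icc 0 1) : ‖v * (1 - v)‖ ≤ 1 / 4 := by
  rw [Real.norm_of_nonneg (mul_nonneg hv.1 (sub_nonneg.2 hv.2))]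
  nlinarith [sq_nonneg (v - 1 / 2)]

theorem hasSum_inv_mul_centralBinom_smul {E : Type*} [NormedAddCommGroup E] [NormedSpace ℝ E]
    [CompleteSpace E] {a : ℕ → E} (ha : Summable fun n ↦ (1 / 4 : ℝ) ^ n * ‖a n‖) :
    HasSum (fun n : ℕ ↦ ((2 * n + 1) * n.centralBinom : ℝ)⁻¹ • a n)
      (∫ v in (0 : ℝ)..1, ∑' n, (v * (1 - v)) ^ n • a n) := by
  have norm_term_le (n : ℕ) {v : ℝ} (hv : v ∈ Set.uIoc 0 1) :
      ‖(v * (1 - v)) ^ n • a n‖ ≤ (1 / 4) ^ n * ‖a n‖ := by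
    rw [Set.uIoc_of_le zero_le_one] at hv
    rw [norm_smul, norm_pow]
    gcongr
    exact norm_mul_one_sub_le (Set.Ioc_subset_Icc_self hv)
  simp_rw [← integral_mul_one_sub_pow, ← intervalIntegral.integral_smul_const]
  exact intervalIntegral.hasSum_integral_of_dominated_convergence
    (fun n _ ↦ (1 / 4 : ℝ) ^ n * ‖a n‖)
    (fun n ↦ Continuous.aestronglyMeasurable (by fun_prop))
    (fun n ↦ .of_forall fun v ↦ norm_term_le n)
    (.of_forall fun _ _ ↦ ha) intervalIntegrable_const
    (.of_forall fun v hv ↦ (ha.of_norm_bounded fun n ↦ norm_term_le n hv).hasSum)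

theorem hasSum_sum_range_succ_mul_pow {K : Type*} [NormedDivisionRing K] [CompleteSpace K]
    {a : ℕ → K} {x : K} (hx : ‖x‖ < 1) (ha : Summable fun n ↦ ‖a n * x ^ n‖) :
    HasSum (fun n ↦ (∑ k ∈ range (n + 1), a k) * x ^ n) ((∑' n, a n * x ^ n) * (1 - x)⁻¹) := by
  rw [← tsum_geometric_of_norm_lt_one hx]
  refine (hasSum_sum_range_mul_of_summable_norm ha
    (summable_norm_geometric_of_norm_lt_one hx)).congr_fun fun n ↦ ?_
  rw [sum_mul]
  refine sum_congr rfl fun k hk ↦ ?_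
  rw [mul_assoc, pow_mul_pow_sub x (mem_range_succ_iff.1 hk)]

-- The term `k = 0` is `0⁻¹ = 0`.
theorem harmonic_eq_sum_range_succ_inv (n : ℕ) : harmonic n = ∑ k ∈ range (n + 1), (k : ℚ)⁻¹ := by
  simp [harmonic, sum_range_succ' _ n]

theorem hasSum_harmonic_mul_pow {x : ℝ} (hx : |x| < 1) :
    HasSum (fun n ↦ (harmonic n : ℝ) * x ^ n) (-(Real.log (1 - x) / (1 - x))) := by
  have log_series : HasSum (fun n : ℕ ↦ (n : ℝ)⁻¹ * x ^ n) (-Real.log (1 - x)) := by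
    rw [← hasSum_nat_add_iff' 1]
    simpa [div_eq_inv_mul] using Real.hasSum_pow_div_log_of_abs_lt_one hx
  have cauchy_product := hasSum_sum_range_succ_mul_pow hx log_series.summable.norm
  rw [log_series.tsum_eq, ← div_eq_mul_inv, neg_div] at cauchy_product
  simpa [harmonic_eq_sum_range_succ_inv] using cauchy_product

theorem stmt_9_general {x : ℝ} (hx : |x| < 4) :
    HasSum (fun n : ℕ ↦ (harmonic n : ℝ) * x ^ n / ((2 * n + 1) * n.centralBinom))
      (-∫ v in (0 : ℝ)..1, Real.log (1 - x * (v * (1 - v))) / (1 - x * (v * (1 - v)))) := by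
  have summable_at_quarter : Summable fun n ↦ (1 / 4 : ℝ) ^ n * ‖(harmonic n : ℝ) * x ^ n‖ := by
    have abs_div_lt : |x / 4| < 1 := by rw [abs_div, Nat.abs_ofNat]; linarith
    refine (hasSum_harmonic_mul_pow abs_div_lt).summable.norm.congr fun n ↦ ?_
    simp only [norm_mul, norm_pow, norm_div, RCLike.norm_ofNat]
    ring
  have generating_function {v : ℝ} (hv : v ∈ Set.uIcc 0 1) :
      ∑' n, (v * (1 - v)) ^ n • ((harmonic n : ℝ) * x ^ n) =
        -(Real.log (1 - x * (v * (1 - v))) / (1 - x * (v * (1 - v)))) := by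
    rw [Set.uIcc_of_le zero_le_one] at hv
    have abs_mul_lt : |x * (v * (1 - v))| < 1 := by
      calc |x * (v * (1 - v))| = |x| * |v * (1 - v)| := abs_mul _ _
        _ ≤ |x| * (1 / 4) := by gcongr; exact norm_mul_one_sub_le hv
        _ < 1 := by linarith
    rw [← (hasSum_harmonic_mul_pow abs_mul_lt).tsum_eq]
    exact tsum_congr fun n ↦ by simp only [smul_eq_mul, mul_pow]; ring
  rw [← intervalIntegral.integral_neg,
    ← intervalIntegral.integral_congr fun v ↦ generating_function]
  simpa only [smul_eq_mul, ← div_eq_inv_mul] using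
    hasSum_inv_mul_centralBinom_smul summable_at_quarter

theorem stmt_9 :
    ∑' n : ℕ, (harmonic n : ℝ) / ((2 * n + 1) * (Nat.choose (2 * n) n)) =
      -∫ v in (0:ℝ)..1, Real.log (1 - v * (1 - v)) / (1 - v * (1 - v)) := by
  simpa [Nat.centralBinom_eq_two_mul_choose] using
    (stmt_9_general (x := 1) (by norm_num)).tsum_eq
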